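/- arXiv:2106.03120 — 2 statements merged into one kernel-verified Lean document; each statement's English description precedes it below -/
import Mathlib

section
/- Let (𝔩,𝔩') be a permissible pair in which both 𝔩 and 𝔩' are ladder multisegments. Write 𝔩 = Δ(c_1, d_1 − 1) + … + Δ(c_λ, d_λ − 1) with c_1 > … > c_λ and d_1 > … > d_λ, and 𝔩' = Δ(c'_1, d'_1 − 1) + … + Δ(c'_{λ'}, d'_{λ'} − 1) with c'_1 > … > c'_{λ'} and d'_1 > … > d'_{λ'}. Then λ' ≤ λ, and c'_j ≤ c_j and d'_j ≤ d_j for all 1 ≤ j ≤ λ'. -/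
/-!
Permissibility, applied to the full chain `segI 0 ≫ segI 1 ≫ ⋯` of the second ladder, yields a
strictly increasing `φ : Fin lam' → Fin lam`. Injectivity of `φ` gives `lam' ≤ lam`, and strict
monotonicity gives `j ≤ φ j`, so `segJ j` begins and ends no earlier than `segJ (φ j)`. Since
`⁻(segI j) ≺ segJ (φ j)` and the begin and end points are integers, the downward shift turns the
strict inequalities in `≺` into the desired weak ones.
-/

/-- A *segment* `Δ(a,b)`: a pair of integers `a ≤ b`.  `b` is the begin point
and `e` the end point. -/
structure Segment where
  b : ℤ
  e : ℤ
  le : b ≤ e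

namespace Segment

/-- `Δ₁ ≪ Δ₂` : `b(Δ₁) < b(Δ₂)` and `e(Δ₁) < e(Δ₂)`. -/
def ll (Δ₁ Δ₂ : Segment) : Prop := Δ₁.b < Δ₂.b ∧ Δ₁.e < Δ₂.e

/-- `Δ₁ ≺ Δ₂` : `b(Δ₁) < b(Δ₂)`, `e(Δ₁) < e(Δ₂)` and `e(Δ₁) ≥ b(Δ₂) - 1`. -/
def prec (Δ₁ Δ₂ : Segment) : Prop := Δ₁.b < Δ₂.b ∧ Δ₁.e < Δ₂.e ∧ Δ₂.b - 1 ≤ Δ₁.e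

/-- `⁻Δ = Δ(a-1, b-1)`. -/
def shiftDown (Δ : Segment) : Segment := ⟨Δ.b - 1, Δ.e - 1, by have := Δ.le; omega⟩

end Segment

/-- Let `(𝔩, 𝔩')` be a permissible pair in which both `𝔩` and `𝔩'`
are ladder multisegments, written `𝔩 = Δ(c_1, d_1 - 1) + ⋯ + Δ(c_λ, d_λ - 1)` with
`c_1 > ⋯ > c_λ`, `d_1 > ⋯ > d_λ`, and `𝔩' = Δ(c'_1, d'_1 - 1) + ⋯ + Δ(c'_{λ'}, d'_{λ'} - 1)`
with `c'_1 > ⋯ > c'_{λ'}`, `d'_1 > ⋯ > d'_{λ'}` (here the ladders are recorded by the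
functions `segJ j = Δ(c_{j+1}, d_{j+1} - 1)` and `segI j = Δ(c'_{j+1}, d'_{j+1} - 1)`, so
that begin and end points are strictly decreasing in `j`).  Then `λ' ≤ λ`, and
`c'_j ≤ c_j`, `d'_j ≤ d_j` for all `1 ≤ j ≤ λ'`. -/
theorem ladder_pair_tableau_bounds (lam lam' : ℕ) (hlam : 0 < lam) (hlam' : 0 < lam')
    (segJ : Fin lam → Segment) (segI : Fin lam' → Segment)
    (hJb : StrictAnti fun j => (segJ j).b) (hJe : StrictAnti fun j => (segJ j).e)
    (hIb : StrictAnti fun j => (segI j).b) (hIe : StrictAnti fun j => (segI j).e)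
    (hperm : ∀ (m : ℕ) (c : Fin m → Fin lam'),
      (∀ r s : Fin m, r < s → Segment.ll (segI (c s)) (segI (c r))) →
      ∃ φ : Fin m → Fin lam, StrictMono φ ∧
        ∀ t : Fin m, Segment.prec (Segment.shiftDown (segI (c t))) (segJ (φ t))) :
    ∃ hle : lam' ≤ lam, ∀ j : Fin lam',
      (segI j).b ≤ (segJ (Fin.castLE hle j)).b ∧ (segI j).e ≤ (segJ (Fin.castLE hle j)).e := by
  obtain ⟨φ, hφ, hprec⟩ := hperm lam' id fun r s hrs => ⟨hIb hrs, hIe hrs⟩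
  have hle : lam' ≤ lam := by
    simpa using Fintype.card_le_of_injective φ hφ.injective
  have hge : ∀ (n : ℕ) (hn : n < lam'), n ≤ (φ ⟨n, hn⟩ : ℕ) := by
    intro n
    induction n with
    | zero => intro _; exact Nat.zero_le _
    | succ k ih =>
      intro hn
      have h₁ := ih (by omega)
      have h₂ : φ ⟨k, by omega⟩ < φ ⟨k + 1, hn⟩ := hφ (Fin.mk_lt_mk.2 k.lt_succ_self)
      rw [Fin.lt_def] at h₂
      omega
  refine ⟨hle, fun j => ?_⟩
  have hj : Fin.castLE hle j ≤ φ j := hge j j.isLt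
  have hb : (segJ (φ j)).b ≤ (segJ (Fin.castLE hle j)).b := hJb.antitone hj
  have he : (segJ (φ j)).e ≤ (segJ (Fin.castLE hle j)).e := hJe.antitone hj
  obtain ⟨h₁, h₂, -⟩ := hprec j
  simp only [Segment.shiftDown, id] at h₁ h₂
  constructor <;> omega
end

section
/- Let (𝔩,𝔪) be a permissible pair with the algorithm notations in place. Then: (a) for every i ∈ I, e(Δ_i) ≤ e(Δ_{i_#}) (equivalently, e(Δ_i) ≤ e(Δ♣_i)); (b) for every j ∈ J, e(Δ_{j_#}) ≤ e(Δ_j); (c) for every i ∈ I∪J, e(Δ♣_{i^∨}) = e(Δ_i). -/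
/-- The standing data of the inverse Knuth–Viennot algorithm: a nonzero multisegment
`𝔪 = Σ_{i ∈ I} Δ_i` indexed by `I = Fin n` (linearly ordered compatibly with begin
points, ties broken by reversed end points), and a ladder multisegment
`𝔩 = Σ_{t ∈ J} Δ_{j_t}` indexed by `J = Fin l` (`jseg t` is the segment `Δ_{j_{t+1}}`,
enumerated so that `Δ_{j_l} ≪ ⋯ ≪ Δ_{j_1}`), such that the pair `(𝔩, 𝔪)` is
permissible. -/
structure KVData where
  n : ℕ
  l : ℕ
  npos : 0 < n
  lpos : 0 < l
  iseg : Fin n → Segment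
  jseg : Fin l → Segment
  iOrder : ∀ i₁ i₂ : Fin n, i₂ < i₁ →
    (iseg i₂).b < (iseg i₁).b ∨ ((iseg i₂).b = (iseg i₁).b ∧ (iseg i₁).e ≤ (iseg i₂).e)
  ladder : ∀ t t' : Fin l, t < t' → Segment.ll (jseg t') (jseg t)
  permissible : ∀ (m : ℕ) (c : Fin m → Fin n),
    (∀ r s : Fin m, r < s → Segment.ll (iseg (c s)) (iseg (c r))) →
    ∃ φ : Fin m → Fin l, StrictMono φ ∧
      ∀ t : Fin m, Segment.prec (Segment.shiftDown (iseg (c t))) (jseg (φ t))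

namespace KVData

variable (D : KVData)

/-- The segment attached to an index in `I ⊔ J`. -/
def segOf : Fin D.n ⊕ Fin D.l → Segment := Sum.elim D.iseg D.jseg

/-- The set `{t : ⁻Δ_i ≪ Δ_{j_t}}` (0-based positions in the ladder `𝔩`). -/
def dPrimeSet (i : Fin D.n) : Set ℕ :=
  {t : ℕ | ∃ h : t < D.l, Segment.ll (Segment.shiftDown (D.iseg i)) (D.jseg ⟨t, h⟩)}

/-- The set `{𝔡'(i_k) - k : i = i_0, Δ_{i_{r+1}} ≪ Δ_{i_r}}` whose minimum is `𝔡(i)`. -/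
def depthSet (d' : Fin D.n → ℕ) (i : Fin D.n) : Set ℤ :=
  {z : ℤ | ∃ (k : ℕ) (c : ℕ → Fin D.n), c 0 = i ∧
    (∀ r < k, Segment.ll (D.iseg (c (r + 1))) (D.iseg (c r))) ∧
    z = (d' (c k) : ℤ) - (k : ℤ)}

/-- `d'` is the function `𝔡'` and `d` the depth function `𝔡` on `I ⊔ J`
(`𝔡'(i) = max{t : ⁻Δ_i ≪ Δ_{j_t}}`, `𝔡(i) = min{𝔡'(i_k) - k}`, `𝔡(j_t) = t`). -/
def DepthSpec (d' : Fin D.n → ℕ) (d : Fin D.n ⊕ Fin D.l → ℤ) : Prop :=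
  (∀ i, IsGreatest (D.dPrimeSet i) (d' i)) ∧
  (∀ i, IsLeast (D.depthSet d' i) (d (Sum.inl i))) ∧
  (∀ t : Fin D.l, d (Sum.inr t) = (t : ℤ))

/-- `σ` is the permutation of `I ⊔ J` whose disjoint cycles are `(i_1, …, i_s, j_t)`
where `{i_1 > … > i_s} ∪ {j_t} = 𝔡⁻¹(t)`:  an element `i ∈ I` is sent to the largest
element of `I` below it in its fiber of `𝔡`, or to the `J`-element of the fiber if
there is none; the `J`-element of a fiber is sent to the largest `I`-element of the
fiber, or to itself if there is none. -/
def SigmaSpec (d : Fin D.n ⊕ Fin D.l → ℤ) (σ : Equiv.Perm (Fin D.n ⊕ Fin D.l)) : Prop :=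
  (∀ i : Fin D.n,
    (∃ i' : Fin D.n,
        IsGreatest {i'' : Fin D.n | i'' < i ∧ d (Sum.inl i'') = d (Sum.inl i)} i' ∧
        σ (Sum.inl i) = Sum.inl i')
    ∨ ((¬ ∃ i'' : Fin D.n, i'' < i ∧ d (Sum.inl i'') = d (Sum.inl i)) ∧
        ∃ t : Fin D.l, (t : ℤ) = d (Sum.inl i) ∧ σ (Sum.inl i) = Sum.inr t)) ∧
  (∀ t : Fin D.l,
    (∃ i : Fin D.n,
        IsGreatest {i' : Fin D.n | d (Sum.inl i') = (t : ℤ)} i ∧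
        σ (Sum.inr t) = Sum.inl i)
    ∨ ((¬ ∃ i : Fin D.n, d (Sum.inl i) = (t : ℤ)) ∧ σ (Sum.inr t) = Sum.inr t))

/-- `e(Δ♣_x) ≠ e(Δ_x)`, i.e. the end point changes at `x`
(recall `Δ♣_x = Δ(b(Δ_x), e(Δ_{σ(x)}))`). -/
def breaksEnd (σ : Equiv.Perm (Fin D.n ⊕ Fin D.l)) (x : Fin D.n ⊕ Fin D.l) : Prop :=
  (D.segOf (σ x)).e ≠ (D.segOf x).e

/-- `vee` is the map `x ↦ x^∨`:  `x^∨ = σ^{-r}(x)` for the least `r ≥ 1` such that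
`e(Δ♣_{σ^{-r}(x)}) ≠ e(Δ_{σ^{-r}(x)})`, and `x^∨ = j_{𝔡(x)}` if no such `r` exists. -/
def VeeSpec (d : Fin D.n ⊕ Fin D.l → ℤ) (σ : Equiv.Perm (Fin D.n ⊕ Fin D.l))
    (vee : Fin D.n ⊕ Fin D.l → Fin D.n ⊕ Fin D.l) : Prop :=
  ∀ x : Fin D.n ⊕ Fin D.l,
    ((∃ r : ℕ, 1 ≤ r ∧ D.breaksEnd σ ((⇑σ.symm)^[r] x)) →
      ∃ r : ℕ, 1 ≤ r ∧ vee x = (⇑σ.symm)^[r] x ∧ D.breaksEnd σ ((⇑σ.symm)^[r] x) ∧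
        ∀ r' : ℕ, 1 ≤ r' → r' < r → ¬ D.breaksEnd σ ((⇑σ.symm)^[r'] x)) ∧
    ((¬ ∃ r : ℕ, 1 ≤ r ∧ D.breaksEnd σ ((⇑σ.symm)^[r] x)) →
      ∃ t : Fin D.l, (t : ℤ) = d x ∧ vee x = Sum.inr t)

/-- The multisegment `𝔪` of the data. -/
def mSeg : Multiset Segment := Multiset.map D.iseg Finset.univ.val

/-- The ladder multisegment `𝔩` of the data. -/
def lSeg : Multiset Segment := Multiset.map D.jseg Finset.univ.val

end KVData

namespace KVData

variable {D : KVData} {d' : Fin D.n → ℕ} {d : Fin D.n ⊕ Fin D.l → ℤ}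
  {σ : Equiv.Perm (Fin D.n ⊕ Fin D.l)}

theorem depth_lt_of_ll (hdep : D.DepthSpec d' d) {i i' : Fin D.n}
    (h : Segment.ll (D.iseg i') (D.iseg i)) : d (Sum.inl i) < d (Sum.inl i') := by
  obtain ⟨k, c, hc0, hc, hz⟩ := (hdep.2.1 i').1
  have hmem : d (Sum.inl i') - 1 ∈ D.depthSet d' i := by
    refine ⟨k + 1, fun r => Nat.casesOn r i c, rfl, ?_, ?_⟩
    · intro r hr
      cases r with
      | zero => simpa [hc0] using h
      | succ r => exact hc r (by omega)
    · push_cast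
      simp only [hz]
      ring
  have := (hdep.2.1 i).2 hmem
  omega

/-- Within a fiber of `𝔡`, the end point weakly increases as the index in `I` decreases. -/
theorem end_le_of_lt (hdep : D.DepthSpec d' d) {i i' : Fin D.n} (hlt : i' < i)
    (heq : d (Sum.inl i') = d (Sum.inl i)) : (D.iseg i).e ≤ (D.iseg i').e := by
  rcases D.iOrder i i' hlt with hb | ⟨-, he⟩
  · by_contra! hcon
    have := depth_lt_of_ll hdep ⟨hb, hcon⟩
    omega
  · exact he

theorem depth_le_depth' (hdep : D.DepthSpec d' d) (i : Fin D.n) :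
    d (Sum.inl i) ≤ d' i :=
  (hdep.2.1 i).2 ⟨0, fun _ => i, rfl, by simp, by simp⟩

/-- The ladder segment of a fiber of `𝔡` has the largest end point in the fiber. -/
theorem end_le_jseg (hdep : D.DepthSpec d' d) {i : Fin D.n} {t : Fin D.l}
    (ht : (t : ℤ) = d (Sum.inl i)) : (D.iseg i).e ≤ (D.jseg t).e := by
  obtain ⟨hl, hll⟩ := (hdep.1 i).1
  have hle := depth_le_depth' hdep i
  have h1 : (D.iseg i).e - 1 < (D.jseg ⟨d' i, hl⟩).e := hll.2
  have h2 : (D.jseg ⟨d' i, hl⟩).e ≤ (D.jseg t).e := by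
    rcases (show t ≤ ⟨d' i, hl⟩ from Fin.le_def.2 (by simp only; omega)).eq_or_lt with h | h
    · rw [h]
    · exact (D.ladder _ _ h).2.le
  omega

/-- Following `σ` from `i ∈ I` eventually reaches the `J`-element of the fiber of `i`. -/
theorem exists_iterate_eq_inr (hσ : D.SigmaSpec d σ) (i : Fin D.n) :
    ∃ (k : ℕ) (t : Fin D.l), (t : ℤ) = d (Sum.inl i) ∧ (⇑σ)^[k] (Sum.inl i) = Sum.inr t := by
  induction i using WellFoundedLT.induction with
  | ind i ih =>
    rcases hσ.1 i with ⟨i', ⟨⟨hlt, heq⟩, -⟩, hs⟩ | ⟨-, t, ht, hs⟩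
    · obtain ⟨k, t, ht, hk⟩ := ih i' hlt
      exact ⟨k + 1, t, ht.trans heq, by rw [Function.iterate_succ_apply, hs, hk]⟩
    · exact ⟨1, t, ht, hs⟩

/-- `σ` has finite order, so every forward iterate is also a backward iterate with at least
one step. -/
theorem exists_symm_iterate_eq (σ : Equiv.Perm (Fin D.n ⊕ Fin D.l)) (k : ℕ)
    (x : Fin D.n ⊕ Fin D.l) :
    ∃ r : ℕ, 1 ≤ r ∧ (⇑σ.symm)^[r] x = (⇑σ)^[k] x := by
  have hN : 0 < orderOf σ := orderOf_pos σ
  have hle : k + 1 ≤ orderOf σ * (k + 1) := Nat.le_mul_of_pos_left _ hN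
  refine ⟨orderOf σ * (k + 1) - k, by omega, ?_⟩
  have hL : Function.LeftInverse (⇑σ.symm)^[orderOf σ * (k + 1) - k]
      (⇑σ)^[orderOf σ * (k + 1) - k] :=
    Function.LeftInverse.iterate σ.symm_apply_apply _
  have hx : (⇑σ)^[orderOf σ * (k + 1) - k] ((⇑σ)^[k] x) = x := by
    rw [← Function.iterate_add_apply, Nat.sub_add_cancel (by omega), ← Equiv.Perm.coe_pow,
      pow_mul, pow_orderOf_eq_one, one_pow, Equiv.Perm.one_apply]
  conv_lhs => rw [← hx]
  exact hL _

end KVData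

/-- properties of `K'`.  Let `(𝔩,𝔪)` be a permissible pair with the
algorithm notations in place.  Then: (a) for every `i ∈ I`, `e(Δ_i) ≤ e(Δ_{i_#})`
(equivalently `e(Δ_i) ≤ e(Δ♣_i)`); (b) for every `j ∈ J`, `e(Δ_{j_#}) ≤ e(Δ_j)`;
(c) for every `x ∈ I ∪ J`, `e(Δ♣_{x^∨}) = e(Δ_x)` (recall `e(Δ♣_y) = e(Δ_{σ(y)})`). -/
theorem club_end_properties (D : KVData) (d' : Fin D.n → ℕ)
    (d : Fin D.n ⊕ Fin D.l → ℤ) (σ : Equiv.Perm (Fin D.n ⊕ Fin D.l))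
    (vee : Fin D.n ⊕ Fin D.l → Fin D.n ⊕ Fin D.l)
    (hdep : D.DepthSpec d' d) (hσ : D.SigmaSpec d σ) (hvee : D.VeeSpec d σ vee) :
    (∀ i : Fin D.n, (D.iseg i).e ≤ (D.segOf (σ (Sum.inl i))).e) ∧
    (∀ t : Fin D.l, (D.segOf (σ (Sum.inr t))).e ≤ (D.jseg t).e) ∧
    (∀ x : Fin D.n ⊕ Fin D.l, (D.segOf (σ (vee x))).e = (D.segOf x).e) := by
  refine ⟨fun i => ?_, fun t => ?_, fun x => ?_⟩
  · rcases hσ.1 i with ⟨i', ⟨⟨hlt, heq⟩, -⟩, hs⟩ | ⟨-, t, ht, hs⟩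
    · rw [hs]
      exact KVData.end_le_of_lt hdep hlt heq
    · rw [hs]
      exact KVData.end_le_jseg hdep ht
  · rcases hσ.2 t with ⟨i, ⟨hi, -⟩, hs⟩ | ⟨-, hs⟩
    · rw [hs]
      exact KVData.end_le_jseg hdep (Eq.symm hi)
    · rw [hs]
      exact le_rfl
  · by_cases hex : ∃ r : ℕ, 1 ≤ r ∧ D.breaksEnd σ ((⇑σ.symm)^[r] x)
    · obtain ⟨r, hr, hv, -, hmin⟩ := (hvee x).1 hex
      have hconst : ∀ s < r, (D.segOf ((⇑σ.symm)^[s] x)).e = (D.segOf x).e := by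
        intro s
        induction s with
        | zero => intro _; rfl
        | succ s ih =>
          intro hs
          have hnb := hmin (s + 1) (by omega) hs
          rw [KVData.breaksEnd, not_not] at hnb
          rw [← hnb, Function.iterate_succ_apply', Equiv.apply_symm_apply]
          exact ih (by omega)
      obtain ⟨s, rfl⟩ : ∃ s, r = s + 1 := ⟨r - 1, by omega⟩
      rw [hv, Function.iterate_succ_apply', Equiv.apply_symm_apply]
      exact hconst s (by omega)
    · obtain ⟨t, ht, hv⟩ := (hvee x).2 hex
      have hconst : ∀ k : ℕ, (D.segOf ((⇑σ)^[k] x)).e = (D.segOf x).e := by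
        intro k
        induction k with
        | zero => rfl
        | succ k ih =>
          obtain ⟨r, hr, hrk⟩ := KVData.exists_symm_iterate_eq σ k x
          have hnb : ¬ D.breaksEnd σ ((⇑σ)^[k] x) := fun hb => hex ⟨r, hr, by rwa [hrk]⟩
          rw [KVData.breaksEnd, not_not] at hnb
          rw [Function.iterate_succ_apply', hnb, ih]
      obtain ⟨k, hk⟩ : ∃ k : ℕ, (⇑σ)^[k] x = Sum.inr t := by
        rcases x with i | s
        · obtain ⟨k, t', ht', hk⟩ := KVData.exists_iterate_eq_inr hσ i
          have htt : t' = t := Fin.ext (by exact_mod_cast ht'.trans ht.symm)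
          exact ⟨k, htt ▸ hk⟩
        · have hst : s = t := by
            have hs := hdep.2.2 s
            exact Fin.ext (by omega)
          exact ⟨0, congrArg Sum.inr hst⟩
      rw [hv, ← hk, ← Function.iterate_succ_apply' (⇑σ)]
      exact hconst (k + 1)
end
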